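/- Let $k$ be a field of characteristic zero, $d \ge 2$, and suppose that in $k[T,X_1,\dots,X_{d+1}]$ we have an identity $0 = P(X_1,\dots,X_{d+1}) + a\,h_{m}(X_1,\dots,X_{d+1})$ where $a \in k$, $m \ge 1$, $h_m$ denotes the complete homogeneous symmetric polynomial of degree $m$, and $P$ is a product of at least two non-constant homogeneous polynomials. Then $a = 0$. -/

import Mathlib

open MvPolynomial

/-!
Setting all but three of the variables to zero, it suffices to see that `h_m(X, Y, Z)` is not a
product `F G` of polynomials without constant term. If it were, Krull's height theorem would give
`F` and `G` a common zero `(x, y, z) ≠ 0` over some extension field, and there `h_m` and its partial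
derivatives would all vanish. But the plane curve `h_m = 0` is smooth: at such a point
`∂h_m/∂X = h_{m-1}(x, x, y, z)`, and the identity
`(x - y) h_{n-1}(x, y, …) = h_n(x, …) - h_n(y, …)` turns the vanishing of the derivatives into
`h_m(x, x, y) = h_m(x, y, y) = 0`. From this `(m + 2) x^(m+1) = h_{m+1}(x, y) = (m + 2) y^(m+1)`,
which forces `x = y`. So `x = y = z`, and `h_m(x, x, x)` is a nonzero multiple of `x ^ m`.
-/

section CommSemiring

variable {R : Type*} [CommSemiring R]

/-- The complete homogeneous symmetric polynomial of degree `n` evaluated at the elements of a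
multiset, encoded as the coefficient of `T ^ n` in `∏ 1 / (1 - x T)`. Multisets make it possible to
repeat arguments, as needed to express the partial derivatives. -/
noncomputable def hsymmEval (s : Multiset R) (n : ℕ) : R :=
  PowerSeries.coeff n (s.map fun x ↦ PowerSeries.mk (x ^ ·)).prod

lemma hsymmEval_zero_right (s : Multiset R) : hsymmEval s 0 = 1 := by
  simp only [hsymmEval, PowerSeries.coeff_zero_eq_constantCoeff_apply, map_multiset_prod,
    Multiset.map_map]
  simp [← PowerSeries.coeff_zero_eq_constantCoeff_apply]

lemma hsymmEval_zero_succ (n : ℕ) : hsymmEval (0 : Multiset R) (n + 1) = 0 := by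
  simp [hsymmEval, PowerSeries.coeff_one]

lemma hsymmEval_singleton (x : R) (n : ℕ) : hsymmEval {x} n = x ^ n := by
  simp [hsymmEval]

lemma hsymmEval_cons_succ (x : R) (s : Multiset R) (n : ℕ) :
    hsymmEval (x ::ₘ s) (n + 1) = hsymmEval s (n + 1) + x * hsymmEval (x ::ₘ s) n := by
  have hgeom : PowerSeries.mk (x ^ ·) =
      1 + PowerSeries.X * (PowerSeries.C x * PowerSeries.mk (x ^ ·)) := by
    ext (_ | n) <;> simp [pow_succ', PowerSeries.coeff_one]
  simp only [hsymmEval, Multiset.map_cons, Multiset.prod_cons]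
  conv_lhs => rw [hgeom, add_mul, one_mul, mul_assoc, mul_assoc, map_add,
    PowerSeries.coeff_succ_X_mul, PowerSeries.coeff_C_mul]

lemma map_hsymmEval {S F : Type*} [CommSemiring S] [FunLike F R S] [RingHomClass F R S] (f : F)
    (s : Multiset R) (n : ℕ) : f (hsymmEval s n) = hsymmEval (s.map f) n := by
  let g : R →+* S := f
  have hmk (x : R) : PowerSeries.map g (PowerSeries.mk (x ^ ·)) = PowerSeries.mk (f x ^ ·) := by
    ext; simp [g]
  change g (hsymmEval s n) = _
  simp only [hsymmEval, ← PowerSeries.coeff_map, map_multiset_prod, Multiset.map_map,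
    Function.comp_def, hmk]

lemma derivation_hsymmEval_succ {A M : Type*} [CommSemiring A] [Algebra A R] [AddCommMonoid M]
    [Module A M] [Module R M] (D : Derivation A R M) (s : Multiset R) (n : ℕ) :
    D (hsymmEval s (n + 1)) = (s.map fun y ↦ hsymmEval (y ::ₘ s) n • D y).sum := by
  induction s using Multiset.induction generalizing n with
  | empty => simp [hsymmEval_zero_succ]
  | cons x s ih =>
    induction n with
    | zero => simp [hsymmEval_cons_succ, ih, hsymmEval_zero_right, add_comm]
    | succ n ihn =>
      have hrec (y : R) : hsymmEval (y ::ₘ x ::ₘ s) (n + 1) =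
          hsymmEval (y ::ₘ s) (n + 1) + x * hsymmEval (y ::ₘ x ::ₘ s) n := by
        rw [Multiset.cons_swap, hsymmEval_cons_succ]
      rw [hsymmEval_cons_succ, map_add, D.leibniz, ih, ihn]
      simp only [hrec, add_smul, mul_smul, Multiset.map_cons, Multiset.sum_cons,
        Multiset.sum_map_add, smul_add, Multiset.smul_sum, Multiset.map_map, Function.comp_def]
      module

section Fintype

variable {ι κ : Type*} [Fintype ι] [Fintype κ]

lemma hsymmEval_map_univ (x : ι → R) (n : ℕ) :
    hsymmEval (Finset.univ.val.map x) n =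
      PowerSeries.coeff n (∏ i, PowerSeries.mk (x i ^ ·)) := by
  rw [hsymmEval, Multiset.map_map]
  rfl

lemma sum_antidiagonalTuple_prod_pow {d : ℕ} (x : Fin d → R) (n : ℕ) :
    ∑ b ∈ Finset.Nat.antidiagonalTuple d n, ∏ i, x i ^ b i =
      hsymmEval (Finset.univ.val.map x) n := by
  rw [hsymmEval_map_univ, PowerSeries.coeff_prod]
  exact Finset.sum_equiv Finsupp.equivFunOnFinite.symm
    (by simp [Finset.Nat.mem_antidiagonalTuple]) (by simp)

lemma hsymmEval_map_univ_of_injective {e : ι → κ} (he : e.Injective) {x : κ → R}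
    (hx : ∀ j ∉ Set.range e, x j = 0) (n : ℕ) :
    hsymmEval (Finset.univ.val.map x) n = hsymmEval (Finset.univ.val.map (x ∘ e)) n := by
  have hmk : PowerSeries.mk ((0 : R) ^ ·) = 1 := by
    ext; simp [PowerSeries.coeff_one, zero_pow_eq]
  rw [hsymmEval_map_univ, hsymmEval_map_univ,
    Fintype.prod_of_injective e he (fun i ↦ PowerSeries.mk ((x ∘ e) i ^ ·))
      (fun j ↦ PowerSeries.mk (x j ^ ·))
      (fun j hj ↦ by rw [hx j hj, hmk]) fun _ ↦ rfl]

lemma killCompl_hsymmEval_X {σ : Type*} {e : ι → κ} (he : e.Injective) {f : κ → σ}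
    (hf : f.Injective) (n : ℕ) :
    killCompl (R := R) (hf.comp he) (hsymmEval (Finset.univ.val.map fun j ↦ X (f j)) n) =
      hsymmEval (Finset.univ.val.map X) n := by
  have hX (j : κ) (hj : j ∉ Set.range e) :
      killCompl (R := R) (hf.comp he) (X (f j)) = 0 := by
    have : f j ∉ Set.range (f ∘ e) := by simpa [hf.eq_iff] using hj
    rw [killCompl, aeval_X, dif_neg this]
  have hXe (i : ι) : killCompl (R := R) (hf.comp he) (X (f (e i))) = X i := by
    simpa using killCompl_rename_app (hf.comp he) (X i : MvPolynomial ι R)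
  rw [map_hsymmEval, Multiset.map_map, Function.comp_def, hsymmEval_map_univ_of_injective he hX]
  simp only [Function.comp_def, hXe]

lemma pderiv_hsymmEval_X_succ (i : ι) (n : ℕ) :
    pderiv i (hsymmEval (Finset.univ.val.map X) (n + 1)) =
      hsymmEval (X i ::ₘ Finset.univ.val.map (X : ι → MvPolynomial ι R)) n := by
  classical
  rw [derivation_hsymmEval_succ, Multiset.map_map]
  simp [pderiv_X, Pi.single_apply]

end Fintype

end CommSemiring

section CommRing

variable {R : Type*} [CommRing R]

lemma hsymmEval_replicate_succ (d : ℕ) (x : R) (n : ℕ) :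
    hsymmEval (Multiset.replicate (d + 1) x) n = (d + n).choose d * x ^ n := by
  have hmk : PowerSeries.mk (x ^ ·) = PowerSeries.rescale x (PowerSeries.mk 1) := by
    ext; simp
  rw [hsymmEval, Multiset.map_replicate, Multiset.prod_replicate, hmk, ← map_pow,
    PowerSeries.mk_one_pow_eq_mk_choose_add, PowerSeries.coeff_rescale, PowerSeries.coeff_mk,
    mul_comm]

lemma sub_mul_hsymmEval_cons_cons (x y : R) (s : Multiset R) (n : ℕ) :
    (x - y) * hsymmEval (x ::ₘ y ::ₘ s) n =
      hsymmEval (x ::ₘ s) (n + 1) - hsymmEval (y ::ₘ s) (n + 1) := by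
  have hx := hsymmEval_cons_succ x (y ::ₘ s) n
  have hy := hsymmEval_cons_succ y (x ::ₘ s) n
  rw [Multiset.cons_swap] at hy
  linear_combination hy - hx

lemma hsymmEval_cons_succ_eq_of_hsymmEval_cons_cons_eq_zero {x y : R} {s : Multiset R} {n : ℕ}
    (h : hsymmEval (x ::ₘ y ::ₘ s) n = 0) :
    hsymmEval (x ::ₘ s) (n + 1) = hsymmEval (y ::ₘ s) (n + 1) := by
  rw [← sub_eq_zero, ← sub_mul_hsymmEval_cons_cons, h, mul_zero]

variable [IsDomain R] {n : ℕ}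

lemma eq_of_hsymmEval_eq_zero (hn₁ : ((n + 1 : ℕ) : R) ≠ 0) (hn₂ : ((n + 2 : ℕ) : R) ≠ 0) {x y : R}
    (hx : hsymmEval {x, y, x} n = 0) (hy : hsymmEval {y, x, y} n = 0) : x = y := by
  have hrep (z : R) : hsymmEval {z, z} (n + 1) = (n + 2 : ℕ) * z ^ (n + 1) :=
    (hsymmEval_replicate_succ 1 z (n + 1)).trans (by rw [Nat.choose_one_right, add_comm 1])
  have hpx : (n + 2 : ℕ) * x ^ (n + 1) = hsymmEval {y, x} (n + 1) :=
    (hrep x).symm.trans (hsymmEval_cons_succ_eq_of_hsymmEval_cons_cons_eq_zero hx)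
  have hpy : (n + 2 : ℕ) * y ^ (n + 1) = hsymmEval {x, y} (n + 1) :=
    (hrep y).symm.trans (hsymmEval_cons_succ_eq_of_hsymmEval_cons_cons_eq_zero hy)
  have hpow : x ^ (n + 1) = y ^ (n + 1) :=
    mul_left_cancel₀ hn₂ (by rw [hpx, hpy, Multiset.pair_comm])
  have hsub : (x - y) * hsymmEval {x, y} (n + 1) = x ^ (n + 2) - y ^ (n + 2) := by
    have h := sub_mul_hsymmEval_cons_cons x y 0 (n + 1)
    rwa [Multiset.cons_zero, Multiset.cons_zero, hsymmEval_singleton, hsymmEval_singleton] at h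
  have hprod : (x - y) * ((n + 1 : ℕ) * y ^ (n + 1)) = 0 := by
    push_cast at hpy ⊢
    linear_combination (x - y) * hpy + hsub + x * hpow
  rcases mul_eq_zero.1 hprod with hxy | hzero
  · exact sub_eq_zero.1 hxy
  · have hy₀ := (mul_eq_zero.1 hzero).resolve_left hn₁
    rw [eq_zero_of_pow_eq_zero hy₀, eq_zero_of_pow_eq_zero (hpow.trans hy₀)]

lemma cast_choose_two_ne_zero (hn₁ : ((n + 1 : ℕ) : R) ≠ 0) (hn₂ : ((n + 2 : ℕ) : R) ≠ 0) :
    ((n + 2).choose 2 : R) ≠ 0 := by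
  have h : (n + 2) * (n + 1) = (n + 2).choose 2 * 2 := by
    simpa using Nat.add_one_mul_choose_eq (n + 1) 1
  refine left_ne_zero_of_mul (b := ((2 : ℕ) : R)) ?_
  rw [← Nat.cast_mul, ← h, Nat.cast_mul]
  exact mul_ne_zero hn₂ hn₁

lemma eq_zero_of_hsymmEval_fin_three_eq_zero (hn₁ : ((n + 2 : ℕ) : R) ≠ 0)
    (hn₂ : ((n + 3 : ℕ) : R) ≠ 0) {x : Fin 3 → R}
    (h : hsymmEval (Finset.univ.val.map x) (n + 1) = 0)
    (hd : ∀ i, hsymmEval (x i ::ₘ Finset.univ.val.map x) n = 0) : x = 0 := by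
  have hdouble {l i j : Fin 3} (hlij : (Finset.univ : Finset (Fin 3)).val = {l, i, j}) :
      hsymmEval {x j, x i, x j} (n + 1) = 0 := by
    have hmap : Finset.univ.val.map x = {x l, x i, x j} := by simp [hlij]
    have hdj := hd j
    rw [hmap] at h hdj
    exact (hsymmEval_cons_succ_eq_of_hsymmEval_cons_cons_eq_zero hdj).trans h
  have heq (i j : Fin 3) (hij : i ≠ j) : x i = x j := by
    obtain ⟨l, hlij⟩ : ∃ l, (Finset.univ : Finset (Fin 3)).val = {l, i, j} := by decide +revert
    have hlji : (Finset.univ : Finset (Fin 3)).val = {l, j, i} := by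
      rw [hlij, Multiset.pair_comm]
    exact eq_of_hsymmEval_eq_zero hn₁ hn₂ (hdouble hlji) (hdouble hlij)
  have hmap (i : Fin 3) : Finset.univ.val.map x = Multiset.replicate 3 (x i) := by
    refine Multiset.eq_replicate.2 ⟨by simp, ?_⟩
    simp only [Multiset.mem_map]
    rintro _ ⟨j, -, rfl⟩
    exact (eq_or_ne j i).elim (congrArg x) (heq j i)
  ext i
  rw [hmap i, hsymmEval_replicate_succ, add_comm 2] at h
  exact eq_zero_of_pow_eq_zero
    ((mul_eq_zero.1 h).resolve_left (cast_choose_two_ne_zero hn₁ hn₂))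

end CommRing

section CommonZero

universe u v

lemma mem_idealOfVars_iff_constantCoeff_eq_zero {σ R : Type*} [CommSemiring R]
    (F : MvPolynomial σ R) : F ∈ idealOfVars σ R ↔ constantCoeff F = 0 := by
  rw [← pow_one (idealOfVars σ R), mem_pow_idealOfVars_iff']
  simp [constantCoeff_eq, Finsupp.degree_eq_zero_iff]

lemma isMaximal_idealOfVars (σ k : Type*) [Field k] : (idealOfVars σ k).IsMaximal := by
  have hker : RingHom.ker constantCoeff = idealOfVars σ k := by
    ext F
    rw [mem_idealOfVars_iff_constantCoeff_eq_zero, RingHom.mem_ker]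
  exact hker ▸ RingHom.ker_isMaximal_of_surjective _ fun c ↦ ⟨C c, constantCoeff_C _ c⟩

lemma height_eq_natCard_of_isMaximal {σ k : Type*} [Finite σ] [Field k]
    (P : Ideal (MvPolynomial σ k)) [P.IsMaximal] : P.height = Nat.card σ := by
  induction σ using Finite.induction_empty_option with
  | of_equiv e ih =>
    let f := (renameEquiv k e).toRingEquiv
    have : (P.comap f).IsMaximal := Ideal.comap_isMaximal_of_equiv f
    rw [← f.height_comap P, ih, Nat.card_congr e]
  | h_empty =>
    let f := (isEmptyRingEquiv k PEmpty).symm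
    have : (P.comap f).IsMaximal := Ideal.comap_isMaximal_of_equiv f
    rw [← f.height_comap P, Ideal.eq_bot_of_prime (P.comap f), Ideal.height_bot]
    simp
  | @h_option σ _ ih =>
    let f := (optionEquivLeft k σ).toRingEquiv
    have : (P.map f).IsMaximal := Ideal.map_isMaximal_of_equiv f
    let p : Ideal (MvPolynomial σ k) := (P.map f).comap Polynomial.C
    have : p.IsMaximal := Polynomial.isMaximal_comap_C_of_isJacobsonRing _
    have : (P.map f).LiesOver p := ⟨rfl⟩
    rw [← f.height_map P, Polynomial.height_eq_height_add_one p, ih]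
    simp

theorem exists_ne_zero_aeval_eq_zero_of_card_lt {k : Type u} {σ : Type v} [Field k] [Finite σ]
    (s : Finset (MvPolynomial σ k)) (hs : s.card < Nat.card σ)
    (hs₀ : ∀ F ∈ s, constantCoeff F = 0) :
    ∃ (K : Type (max u v)) (_ : Field K) (_ : Algebra k K) (x : σ → K),
      x ≠ 0 ∧ ∀ F ∈ s, aeval x F = 0 := by
  have := isMaximal_idealOfVars σ k
  have hle : Ideal.span (s : Set (MvPolynomial σ k)) ≤ idealOfVars σ k :=
    Ideal.span_le.2 fun F hF ↦ (mem_idealOfVars_iff_constantCoeff_eq_zero F).2 (hs₀ F hF)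
  obtain ⟨p, hp, hpM⟩ := Ideal.exists_minimalPrimes_le hle
  have : p.IsPrime := hp.isPrime
  obtain ⟨i, hi⟩ : ∃ i, X i ∉ p := by
    by_contra! hX
    have hpeq : p = idealOfVars σ k :=
      hpM.antisymm (Ideal.span_le.2 (Set.range_subset_iff.2 hX))
    have hheight := Ideal.height_le_card_of_mem_minimalPrimes_span_finset hp
    rw [hpeq, height_eq_natCard_of_isMaximal, Nat.cast_le] at hheight
    exact hs.not_ge hheight
  let A := MvPolynomial σ k ⧸ p
  let φ : MvPolynomial σ k →ₐ[k] FractionRing A :=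
    (IsScalarTower.toAlgHom k A (FractionRing A)).comp (Ideal.Quotient.mkₐ k p)
  have hφ (F : MvPolynomial σ k) : φ F = 0 ↔ F ∈ p :=
    (FaithfulSMul.algebraMap_eq_zero_iff A (FractionRing A)).trans Ideal.Quotient.eq_zero_iff_mem
  refine ⟨FractionRing A, inferInstance, inferInstance, φ ∘ X,
    fun h ↦ hi ((hφ _).1 (congrFun h i)), fun F hF ↦ ?_⟩
  rw [← aeval_unique, hφ]
  exact hp.1.2 (Ideal.subset_span hF)

end CommonZero

lemma hsymmEval_X_fin_three_ne_mul {k : Type*} [Field k] {m : ℕ} (hm₁ : ((m + 1 : ℕ) : k) ≠ 0)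
    (hm₂ : ((m + 2 : ℕ) : k) ≠ 0) {F G : MvPolynomial (Fin 3) k} (hF : constantCoeff F = 0)
    (hG : constantCoeff G = 0) : hsymmEval (Finset.univ.val.map X) m ≠ F * G := by
  classical
  intro hFG
  rcases m with _ | n
  · simpa [hsymmEval_zero_right, hF] using congrArg constantCoeff hFG
  obtain ⟨K, _, _, x, hx₀, hx⟩ := exists_ne_zero_aeval_eq_zero_of_card_lt {F, G}
    (Finset.card_le_two.trans_lt (by simp)) (by simp [hF, hG])
  obtain ⟨hFx, hGx⟩ : aeval x F = 0 ∧ aeval x G = 0 := by simpa using hx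
  have hcast {N : ℕ} (hN : (N : k) ≠ 0) : (N : K) ≠ 0 := by
    rwa [← map_natCast (algebraMap k K), map_ne_zero]
  refine hx₀ (eq_zero_of_hsymmEval_fin_three_eq_zero (n := n) (hcast hm₁) (hcast hm₂) ?_ fun i ↦ ?_)
  · have h := congrArg (aeval x) hFG
    simpa only [map_hsymmEval, Multiset.map_map, Function.comp_def, aeval_X, map_mul, hFx,
      zero_mul] using h
  · have h := congrArg (fun p ↦ aeval x (pderiv i p)) hFG
    simpa only [pderiv_hsymmEval_X_succ, map_hsymmEval, Multiset.map_cons, Multiset.map_map,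
      Function.comp_def, aeval_X, Derivation.leibniz, smul_eq_mul, map_add, map_mul, hFx, hGx,
      zero_mul, add_zero] using h

theorem eq_zero_of_product_plus_hsymm_general {k σ κ : Type*} [Field k] {n m : ℕ} (hn : 3 ≤ n)
    (hm₁ : ((m + 1 : ℕ) : k) ≠ 0) (hm₂ : ((m + 2 : ℕ) : k) ≠ 0) (a : k) {f : Fin n → σ}
    (hf : f.Injective) (s : Finset κ) (hs : 1 < s.card) (P : κ → MvPolynomial σ k)
    (hP : ∀ i ∈ s, constantCoeff (P i) = 0)
    (heq : 0 = ∏ i ∈ s, P i +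
      C a * ∑ b ∈ Finset.Nat.antidiagonalTuple n m, ∏ j, X (f j) ^ b j) :
    a = 0 := by
  classical
  by_contra ha
  obtain ⟨i, hi, j, hj, hij⟩ := Finset.one_lt_card.1 hs
  have he := Fin.castLE_injective hn
  let ψ := killCompl (R := k) (hf.comp he)
  have hψP (l : κ) (hl : l ∈ s) : constantCoeff (ψ (P l)) = 0 := by
    simpa [ψ, constantCoeff_eq, coeff_killCompl] using hP l hl
  have hψ : 0 = ψ (P i) * ψ (∏ l ∈ s.erase i, P l) + C a * hsymmEval (Finset.univ.val.map X) m := by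
    rw [← killCompl_hsymmEval_X he hf, ← killCompl_C (hf.comp he), ← map_mul, ← map_mul, ← map_add,
      Finset.mul_prod_erase s P hi, ← sum_antidiagonalTuple_prod_pow, ← heq, map_zero]
  have hinv : (C a⁻¹ * C a : MvPolynomial (Fin 3) k) = 1 := by
    rw [← C_mul, inv_mul_cancel₀ ha, C_1]
  refine hsymmEval_X_fin_three_ne_mul hm₁ hm₂ (F := ψ (P i))
    (G := -C a⁻¹ * ψ (∏ l ∈ s.erase i, P l)) (hψP i hi) ?_ ?_
  · rw [map_mul, map_prod, map_prod,
      Finset.prod_eq_zero (Finset.mem_erase.2 ⟨hij.symm, hj⟩) (hψP j hj), mul_zero]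
  · linear_combination (-hsymmEval (Finset.univ.val.map X) m) * hinv - C a⁻¹ * hψ

/-- Let `k` be a field of characteristic zero and `d ≥ 2`. If in `k[T, X₁, …, X_{d+1}]`
we have `0 = P + a·h_m(X₁, …, X_{d+1})` where `m ≥ 1`, `h_m` is the complete homogeneous
symmetric polynomial of degree `m`, and `P` is a product of at least two non-constant
homogeneous polynomials, then `a = 0`. -/
theorem eq_zero_of_product_plus_hsymm {k : Type*} [Field k] [CharZero k]
    (d m : ℕ) (hd : 2 ≤ d) (hm : 1 ≤ m) (a : k)
    (l : ℕ) (hl : 2 ≤ l) (P : Fin l → MvPolynomial (Unit ⊕ Fin (d + 1)) k)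
    (hP : ∀ i, ∃ n, 1 ≤ n ∧ (P i).IsHomogeneous n)
    (heq : (0 : MvPolynomial (Unit ⊕ Fin (d + 1)) k) =
      (∏ i, P i) + C a * ∑ b ∈ Finset.Nat.antidiagonalTuple (d + 1) m,
        ∏ j, X (Sum.inr j) ^ b j) :
    a = 0 := by
  refine eq_zero_of_product_plus_hsymm_general (by omega) (Nat.cast_ne_zero.2 m.succ_ne_zero)
    (Nat.cast_ne_zero.2 (m + 1).succ_ne_zero) a Sum.inr_injective Finset.univ (by simpa) P
    (fun i _ ↦ ?_) heq
  obtain ⟨n, hn, hPn⟩ := hP i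
  exact hPn.coeff_eq_zero (by simp; omega)
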